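/- Let A be a bounded invertible Mealy automaton over X with A = C(A). Then the group G_A is finite if and only if there is a constant C such that every e-orbit O^e(v), v ∈ X^*, has at most C elements. -/

import Mathlib

/-- A Mealy automaton over alphabet `X` with state set `S`:
the transition-output function sends `(s, x)` to `(output letter, next state)`. -/
structure Mealy (S X : Type*) where
  step : S → X → X × S

namespace Mealy

variable {S X : Type*}

/-- The section `s|_v`: the state reached after processing the word `v` from state `s`. -/
def sec (A : Mealy S X) (s : S) : List X → S
  | [] => s
  | x :: v => A.sec (A.step s x).2 v

/-- The action of a state on finite words (lists of letters, read left to right). -/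
def act (A : Mealy S X) (s : S) : List X → List X
  | [] => []
  | x :: v => (A.step s x).1 :: A.act (A.step s x).2 v

/-- A state is trivial if it acts on `X^*` as the identity. -/
def IsTrivialState (A : Mealy S X) (s : S) : Prop := ∀ v : List X, A.act s v = v

/-- An automaton is invertible if every state acts on the letters by a permutation. -/
def Invertible (A : Mealy S X) : Prop :=
  ∀ s : S, Function.Bijective fun x : X => (A.step s x).1

/-- The automaton group `G_A`: the subgroup of permutations of `X^*` generated by
the permutations defined by the states of `A`. -/
def autGroup (A : Mealy S X) : Subgroup (Equiv.Perm (List X)) :=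
  Subgroup.closure { f : Equiv.Perm (List X) | ∃ s : S, ∀ v : List X, f v = A.act s v }

/-- A left-infinite sequence `…x₂x₁` is encoded as `p : ℕ → X` with `p 0 = x₁`, `p 1 = x₂`, ….
It is post-critical if it is the sequence of input labels or of output labels of a
left-infinite directed path in `A` ending at a non-trivial state. -/
def IsPostCritical (A : Mealy S X) (p : ℕ → X) : Prop :=
  ∃ (σ : ℕ → S) (inp out : ℕ → X),
    (∀ n, A.step (σ (n + 1)) (inp n) = (out n, σ n)) ∧
      ¬A.IsTrivialState (σ 0) ∧ (p = inp ∨ p = out)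

/-- The post-critical set of `A`. -/
def PostCriticalSet (A : Mealy S X) : Set (ℕ → X) := { p | A.IsPostCritical p }

/-- An automaton is bounded if its post-critical set is finite. -/
def Bounded (A : Mealy S X) : Prop := A.PostCriticalSet.Finite

/-- The length-`n` suffix (as a finite word, read left to right) of a left-infinite
sequence `…x₂x₁` encoded as `p : ℕ → X`: the word `xₙ…x₂x₁`. -/
def lsuffix (p : ℕ → X) (n : ℕ) : List X := (List.range n).reverse.map p

/-- A finite word is post-critical if it is a suffix of some post-critical sequence. -/
def IsPostCriticalWord (A : Mealy S X) (v : List X) : Prop :=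
  ∃ p : ℕ → X, A.IsPostCritical p ∧ v = lsuffix p v.length

/-- The base relation for `e`-equivalence: `v ≈ u` if some state `s` satisfies
`s|_v` trivial and `s(v) = u`, or `s|_u` trivial and `s(u) = v`. -/
def ERel (A : Mealy S X) (v u : List X) : Prop :=
  ∃ s : S, (A.IsTrivialState (A.sec s v) ∧ A.act s v = u) ∨
    (A.IsTrivialState (A.sec s u) ∧ A.act s u = v)

/-- `e`-equivalence: the equivalence relation generated by `≈`. -/
def EEquiv (A : Mealy S X) : List X → List X → Prop := Relation.EqvGen A.ERel

/-- The `e`-orbit of a word. -/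
def eOrbit (A : Mealy S X) (v : List X) : Set (List X) := { u | A.EEquiv v u }

/-- The orbit of a finite word under the automaton group. -/
def orbit (A : Mealy S X) (v : List X) : Set (List X) := { u | ∃ g ∈ A.autGroup, g v = u }

/-- Reachability by a directed path in the automaton. -/
def Reaches (A : Mealy S X) : S → S → Prop :=
  Relation.ReflTransGen fun a b => ∃ x : X, (A.step a x).2 = b

/-- The states of the circuit part `C(A)`: states reachable by a directed path
from some directed cycle of `A`. -/
def circuitStates (A : Mealy S X) : Set S :=
  { s | ∃ t : S, (∃ x : X, A.Reaches (A.step t x).2 t) ∧ A.Reaches t s }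

/-- The circuit part `C(A)` as a subautomaton. -/
def circuitPart (A : Mealy S X) : Mealy A.circuitStates X where
  step s x :=
    ((A.step s.1 x).1,
      ⟨(A.step s.1 x).2, by
        obtain ⟨t, hc, hr⟩ := s.2
        exact ⟨t, hc, hr.tail ⟨x, rfl⟩⟩⟩)

/-- The subautomaton induced on a subset of states closed under transitions. -/
def subautomaton (A : Mealy S X) (T : Set S)
    (hT : ∀ s ∈ T, ∀ x : X, (A.step s x).2 ∈ T) : Mealy T X where
  step s x := ((A.step s.1 x).1, ⟨(A.step s.1 x).2, hT s.1 s.2 x⟩)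

/-- The extension of a length- and prefix-preserving map on finite words to
right-infinite sequences (letter by letter). -/
def extOmega (f : List X → List X) (w : ℕ → X) : ℕ → X :=
  fun n => (f ((List.range (n + 1)).map w)).getD n (w n)

/-- The orbit of a right-infinite sequence under the automaton group. -/
def orbitOmega (A : Mealy S X) (w : ℕ → X) : Set (ℕ → X) :=
  { w' | ∃ g ∈ A.autGroup, w' = extOmega (⇑(g : Equiv.Perm (List X))) w }

/-- The group `G_A` is level-transitive if it acts transitively on each level `X^n`. -/
def LevelTransitive (A : Mealy S X) : Prop :=
  ∀ v u : List X, v.length = u.length → ∃ g ∈ A.autGroup, g v = u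

end Mealy

/-- The run of a deterministic finite-state machine on a right-infinite input:
`dfaRun δ q₀ w n` is the state after reading the first `n` letters. -/
def dfaRun {Q X : Type*} (δ : Q → X → Q) (q₀ : Q) (w : ℕ → X) : ℕ → Q
  | 0 => q₀
  | n + 1 => δ (dfaRun δ q₀ w n) (w n)

/-- A concrete encoding of an invertible Mealy automaton (with state set `Fin n`
over alphabet `Fin k`) as a natural number. -/
def encodeAut (n k : ℕ) (step : Fin n → Fin k → Fin k × Fin n) : ℕ :=
  Nat.pair n (Nat.pair k (Encodable.encode
    ((List.finRange n).flatMap fun s =>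
      (List.finRange k).map fun x =>
        Nat.pair ((step s x).1 : ℕ) ((step s x).2 : ℕ))))

namespace Mealy

variable {S X : Type*}

theorem act_append (A : Mealy S X) (s : S) (v w : List X) :
    A.act s (v ++ w) = A.act s v ++ A.act (A.sec s v) w := by
  induction v generalizing s with
  | nil => rfl
  | cons x v ih => simp [act, sec, ih]

theorem sec_append (A : Mealy S X) (s : S) (v w : List X) :
    A.sec s (v ++ w) = A.sec (A.sec s v) w := by
  induction v generalizing s with
  | nil => rfl
  | cons x v ih => simp [sec, ih]

theorem act_length (A : Mealy S X) (s : S) (v : List X) : (A.act s v).length = v.length := by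
  induction v generalizing s with
  | nil => rfl
  | cons x v ih => simp [act, ih]

theorem act_bijective (A : Mealy S X) (hInv : A.Invertible) (s : S) :
    Function.Bijective (A.act s) := by
  constructor
  · intro v w h
    induction v generalizing s w with
    | nil => cases w with
      | nil => rfl
      | cons y w => simp [act] at h
    | cons x v ih => cases w with
      | nil => simp [act] at h
      | cons y w =>
        simp only [act, List.cons.injEq] at h
        have hxy : x = y := (hInv s).1 h.1
        subst hxy
        rw [ih _ h.2]
  · intro w
    induction w generalizing s with
    | nil => exact ⟨[], rfl⟩
    | cons y w ih =>
      obtain ⟨x, hx⟩ := (hInv s).2 y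
      obtain ⟨v, hv⟩ := ih (A.step s x).2
      exact ⟨x :: v, by simp only [act, hv]; simpa using hx⟩

theorem exists_pred (A : Mealy S X) (hCA : ∀ s : S, s ∈ A.circuitStates) (s : S) :
    ∃ t : S, ∃ x : X, (A.step t x).2 = s := by
  obtain ⟨t, ⟨x, hx⟩, hr⟩ := hCA s
  rcases hr.cases_tail with h | ⟨c, _, y, hy⟩
  · subst h
    rcases hx.cases_tail with h | ⟨c, _, y, hy⟩
    · exact ⟨_, x, h.symm⟩
    · exact ⟨c, y, hy⟩
  · exact ⟨c, y, hy⟩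

theorem lsuffix_succ (p q : ℕ → X) (x : X) (h0 : p 0 = x) (h : ∀ n, p (n + 1) = q n) (n : ℕ) :
    lsuffix p (n + 1) = lsuffix q n ++ [x] := by
  simp only [lsuffix, List.range_succ_eq_map, List.reverse_cons, List.map_append, List.map_cons,
    List.map_nil, h0, ← List.map_reverse, List.map_map]
  congr 1
  exact List.map_congr_left fun a _ => h a

theorem exists_path (A : Mealy S X) (hCA : ∀ s : S, s ∈ A.circuitStates) (s : S) (v : List X) :
    ∃ (σ : ℕ → S) (inp out : ℕ → X),
      (∀ n, A.step (σ (n + 1)) (inp n) = (out n, σ n)) ∧ σ 0 = A.sec s v ∧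
        lsuffix inp v.length = v ∧ lsuffix out v.length = A.act s v := by
  induction v using List.reverseRecOn with
  | nil =>
    choose pr lt h using A.exists_pred hCA
    refine ⟨fun n => pr^[n] s, fun n => lt (pr^[n] s),
      fun n => (A.step (pr^[n+1] s) (lt (pr^[n] s))).1, ?_, rfl, rfl, rfl⟩
    intro n
    ext
    · rfl
    · simp only [Function.iterate_succ_apply']
      exact h _
  | append_singleton v x ih =>
    obtain ⟨σ, inp, out, h, h0, hi, ho⟩ := ih
    refine ⟨fun n => Nat.casesOn n (A.step (σ 0) x).2 σ, fun n => Nat.casesOn n x inp,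
      fun n => Nat.casesOn n (A.step (σ 0) x).1 out, ?_, ?_, ?_, ?_⟩
    · rintro (_ | n)
      · rfl
      · exact h n
    · simp [sec_append, sec, h0]
    · rw [List.length_append, List.length_singleton,
        lsuffix_succ _ inp x rfl (fun _ => rfl), hi]
    · rw [List.length_append, List.length_singleton,
        lsuffix_succ _ out (A.step (σ 0) x).1 rfl (fun _ => rfl), ho, act_append, h0]
      rfl

theorem edge_cases (A : Mealy S X) (hCA : ∀ s : S, s ∈ A.circuitStates) (s : S) (v : List X) :
    A.EEquiv v (A.act s v) ∨
      ((∃ p ∈ A.PostCriticalSet, v = lsuffix p v.length) ∧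
        ∃ p ∈ A.PostCriticalSet, A.act s v = lsuffix p v.length) := by
  by_cases ht : A.IsTrivialState (A.sec s v)
  · exact Or.inl (Relation.EqvGen.rel _ _ ⟨s, Or.inl ⟨ht, rfl⟩⟩)
  · obtain ⟨σ, inp, out, h, h0, hi, ho⟩ := A.exists_path hCA s v
    rw [← h0] at ht
    exact Or.inr ⟨⟨inp, ⟨σ, inp, out, h, ht, Or.inl rfl⟩, hi.symm⟩,
      ⟨out, ⟨σ, inp, out, h, ht, Or.inr rfl⟩, ho.symm⟩⟩

/-- The union of the e-orbits which together contain the whole orbit of `v`. -/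
def cover (A : Mealy S X) (v : List X) : Set (List X) :=
  A.eOrbit v ∪ ⋃ p ∈ A.PostCriticalSet, A.eOrbit (lsuffix p v.length)

theorem cover_closed (A : Mealy S X) {v u w : List X} (hu : u ∈ A.cover v)
    (h : A.EEquiv u w ∨ ∃ p ∈ A.PostCriticalSet, w = lsuffix p v.length) : w ∈ A.cover v := by
  rcases h with h | ⟨p, hp, rfl⟩
  · rcases hu with hu | hu
    · exact Or.inl (Relation.EqvGen.trans _ _ _ hu h)
    · simp only [Set.mem_iUnion] at hu
      obtain ⟨p, hp, hu⟩ := hu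
      refine Or.inr ?_
      simp only [Set.mem_iUnion]
      exact ⟨p, hp, Relation.EqvGen.trans _ _ _ hu h⟩
  · refine Or.inr ?_
    simp only [Set.mem_iUnion]
    exact ⟨p, hp, Relation.EqvGen.refl _⟩

theorem mem_cover (A : Mealy S X) (hCA : ∀ s : S, s ∈ A.circuitStates)
    (g : Equiv.Perm (List X)) (hg : g ∈ A.autGroup) (v : List X) :
    ∀ u ∈ A.cover v, u.length = v.length → g u ∈ A.cover v ∧ (g u).length = v.length := by
  induction hg using Subgroup.closure_induction'' with
  | mem f hf =>
    obtain ⟨s, hs⟩ := hf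
    intro u hu hl
    rw [hs]
    refine ⟨?_, by rw [act_length, hl]⟩
    rcases A.edge_cases hCA s u with h | ⟨_, h⟩
    · exact A.cover_closed hu (Or.inl h)
    · rw [hl] at h
      exact A.cover_closed hu (Or.inr h)
  | inv_mem f hf =>
    obtain ⟨s, hs⟩ := hf
    intro u hu hl
    have e : A.act s (f⁻¹ u) = u := by rw [← hs]; simp
    have el : (f⁻¹ u).length = v.length := by rw [← hl, ← A.act_length s (f⁻¹ u), e]
    refine ⟨?_, el⟩
    rcases A.edge_cases hCA s (f⁻¹ u) with h | ⟨h, _⟩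
    · rw [e] at h
      exact A.cover_closed hu (Or.inl (Relation.EqvGen.symm _ _ h))
    · rw [el] at h
      exact A.cover_closed hu (Or.inr h)
  | one => exact fun u hu hl => ⟨hu, hl⟩
  | mul x y _ _ hx hy =>
    intro u hu hl
    obtain ⟨h1, h2⟩ := hy u hu hl
    exact hx _ h1 h2

theorem eOrbit_subset_orbit (A : Mealy S X) (hInv : A.Invertible) (v : List X) :
    A.eOrbit v ⊆ A.orbit v := by
  intro u hu0
  have hu : Relation.EqvGen A.ERel v u := hu0
  clear hu0
  have key : ∀ s v, ∃ g ∈ A.autGroup, g v = A.act s v := fun s v =>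
    ⟨Equiv.ofBijective _ (A.act_bijective hInv s),
      Subgroup.subset_closure ⟨s, fun _ => rfl⟩, rfl⟩
  induction hu with
  | rel v u h =>
    obtain ⟨s, ⟨_, h⟩ | ⟨_, h⟩⟩ := h
    · obtain ⟨g, hg, e⟩ := key s v
      exact ⟨g, hg, e.trans h⟩
    · obtain ⟨g, hg, e⟩ := key s u
      exact ⟨g⁻¹, inv_mem hg, by rw [← h, ← e]; simp⟩
  | refl v => exact ⟨1, one_mem _, rfl⟩
  | symm v u _ ih =>
    obtain ⟨g, hg, e⟩ := ih
    exact ⟨g⁻¹, inv_mem hg, by rw [← e]; simp⟩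
  | trans v u w _ _ h1 h2 =>
    obtain ⟨g, hg, rfl⟩ := h1
    obtain ⟨k, hk, rfl⟩ := h2
    exact ⟨k * g, mul_mem hk hg, rfl⟩

/-- A finitely generated permutation group with uniformly bounded orbits is finite. -/
theorem finite_of_bounded_orbits {Y : Type*} (T : Set (Equiv.Perm Y)) (hT : T.Finite) (K : ℕ)
    (h : ∀ v : Y, (MulAction.orbit (Subgroup.closure T) v).Finite ∧
      (MulAction.orbit (Subgroup.closure T) v).ncard ≤ K) : Finite (Subgroup.closure T) := by
  set G := Subgroup.closure T with hG
  have : Finite T := hT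
  have hfin : Finite (G →* Equiv.Perm (Fin K)) := by
    refine Finite.of_injective
      (fun (φ : G →* Equiv.Perm (Fin K)) (t : T) => φ ⟨t.1, Subgroup.subset_closure t.2⟩) ?_
    intro φ ψ e
    ext1 ⟨g, hg⟩
    induction hg using Subgroup.closure_induction with
    | mem x hx => exact congrFun e ⟨x, hx⟩
    | one => exact (map_one φ).trans (map_one ψ).symm
    | mul x y hx hy h1 h2 =>
      have : (⟨x * y, mul_mem hx hy⟩ : G) = ⟨x, hx⟩ * ⟨y, hy⟩ := rfl
      rw [this, map_mul, map_mul, h1, h2]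
    | inv x hx h1 =>
      have : (⟨x⁻¹, inv_mem hx⟩ : G) = ⟨x, hx⟩⁻¹ := rfl
      rw [this, map_inv, map_inv, h1]
  refine Finite.of_injective
    (fun (g : G) (φ : G →* Equiv.Perm (Fin K)) => φ g) ?_
  intro g k e
  apply Subtype.ext
  ext v
  obtain ⟨hf, hc⟩ := h v
  have : Fintype (MulAction.orbit G v) := hf.fintype
  have hcard : Fintype.card (MulAction.orbit G v) ≤ Fintype.card (Fin K) := by
    rw [Fintype.card_fin, ← Nat.card_eq_fintype_card, Nat.card_coe_set_eq]
    exact hc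
  obtain ⟨ι⟩ := Function.Embedding.nonempty_of_card_le hcard
  have e1 := congrFun e ((Equiv.Perm.viaEmbeddingHom ι).comp
    (MulAction.toPermHom G (MulAction.orbit G v)))
  have e2 := Equiv.Perm.viaEmbeddingHom_injective ι e1
  have e3 := congrArg Subtype.val
    (Equiv.congr_fun e2 ⟨v, MulAction.mem_orbit_self v⟩)
  exact e3

end Mealy

theorem finite_iff_eOrbits_uniformly_bounded {S X : Type*} [Fintype S] [Fintype X]
    (hX : 2 ≤ Fintype.card X) (A : Mealy S X) (hInv : A.Invertible)
    (hBdd : A.Bounded) (hCA : ∀ s : S, s ∈ A.circuitStates) :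
    Finite A.autGroup ↔
      ∃ C : ℕ, ∀ v : List X, (A.eOrbit v).Finite ∧ (A.eOrbit v).ncard ≤ C := by
  constructor
  · intro hfin
    refine ⟨Nat.card A.autGroup, fun v => ?_⟩
    have hr : A.orbit v = Set.range (fun g : A.autGroup => g.1 v) := by
      ext u
      simp [Mealy.orbit]
    have hsub := A.eOrbit_subset_orbit hInv v
    have hof : (A.orbit v).Finite := by
      rw [hr]
      exact Set.finite_range _
    refine ⟨hof.subset hsub, (Set.ncard_le_ncard hsub hof).trans ?_⟩
    rw [hr, ← Nat.card_coe_set_eq]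
    exact Finite.card_range_le _
  · rintro ⟨C, hC⟩
    have hPF : A.PostCriticalSet.Finite := hBdd
    refine Mealy.finite_of_bounded_orbits _ ?_ (C + hPF.toFinset.card * C) ?_
    · have : Finite { f : Equiv.Perm (List X) | ∃ s : S, ∀ v : List X, f v = A.act s v } := by
        refine Finite.of_injective (fun f => f.2.choose) ?_
        intro f g e
        apply Subtype.ext
        ext1 v
        have e : f.2.choose = g.2.choose := e
        rw [f.2.choose_spec v, g.2.choose_spec v, e]
      exact this
    · intro v
      have hcf : (A.cover v).Finite :=
        (hC v).1.union (hPF.biUnion fun p _ => (hC _).1)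
      have hsub : MulAction.orbit A.autGroup v ⊆ A.cover v := by
        rintro _ ⟨⟨g, hg⟩, rfl⟩
        exact (A.mem_cover hCA g hg v v (Or.inl (Relation.EqvGen.refl _)) rfl).1
      refine ⟨hcf.subset hsub, (Set.ncard_le_ncard hsub hcf).trans ?_⟩
      refine (Set.ncard_union_le _ _).trans (Nat.add_le_add (hC v).2 ?_)
      have : (⋃ p ∈ A.PostCriticalSet, A.eOrbit (Mealy.lsuffix p v.length)) =
          ⋃ p ∈ hPF.toFinset, A.eOrbit (Mealy.lsuffix p v.length) := by simp
      rw [this]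
      refine (Finset.set_ncard_biUnion_le _ _).trans ?_
      refine (Finset.sum_le_card_nsmul _ _ C fun p _ => (hC _).2).trans ?_
      simp
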